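/- Let W be a finite subset of ℝ^5 and let h^(1),…,h^(5) ∈ ℝ^5 be such that for each s ∈ {1,…,5}, h^(s) is an s-coordinate hyperplane for W. Then there exist indices i < j in {1,…,5} such that no w ∈ W satisfies both type_{h^(i)}(w) = type_{h^(j)}(w) and |type_{h^(i)}(w)| = 2 (equivalently, by the stable-intersection criterion, H(h^(i)) and H(h^(j)) contain every point of W in their stable intersection). -/

import Mathlib

noncomputable section

/-- The type of `w` with respect to `h`: the set of indices at which the minimum of
`h i + w i` is attained. -/
def typeSet (h w : Fin 5 → ℝ) : Set (Fin 5) :=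
  {i | ∀ j, h i + w i ≤ h j + w j}

/-- `h` is an `s`-coordinate hyperplane for `W`: every `w ∈ W` lies on the tropical
hyperplane `H(h)` (its type has at least two elements) and `s` is not in its type. -/
def IsCoordHyp (s : Fin 5) (h : Fin 5 → ℝ) (W : Finset (Fin 5 → ℝ)) : Prop :=
  ∀ w ∈ W, (∃ i j : Fin 5, i ≠ j ∧ i ∈ typeSet h w ∧ j ∈ typeSet h w) ∧ s ∉ typeSet h w

/-!
Suppose that every pair `i ≠ j` has a witness, a point at which `H i` and `H j` have the same
two-element type, and colour the edge `ij` of the complete graph on the five indices by the one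
index `c i j` that is neither `i` nor `j` nor in that type. Then `H i - H j` takes equal values at
the two indices other than `i`, `j` and `c i j`, and comparing each of the rows in the type with
`H i` and `H j` at the witness gives strict inequalities between such differences. These force the
colouring to be proper, so `c a` permutes the other four indices, and it has to be a 4-cycle. Orient
`ij` from `i` to `j` when `H i - H j` is strictly smallest at `c i j`. The inequalities now say that
for all `a ≠ i` there is an arc from `c a i` to `a` or from `a` to `i`. Hence the set of heads of
arcs out of `a` is invariant under the 4-cycle `c a`: a vertex with an outgoing arc has an arc to
every other vertex, so all arcs start at one vertex `p`. But then `c a i = p` for all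
distinct `a, i ≠ p`, which is absurd for a proper colouring.
-/

variable {ι R : Type*}

lemma mem_of_nodup_of_length_eq_card [Fintype ι] {l : List ι} (hl : l.Nodup)
    (hcard : l.length = Fintype.card ι) (x : ι) : x ∈ l := by
  by_contra hx
  have hle := (List.nodup_cons.mpr ⟨hx, hl⟩).length_le_card
  rw [List.length_cons] at hle
  omega

lemma exists_notMem_of_length_lt_card [Fintype ι] {l : List ι}
    (hcard : l.length < Fintype.card ι) : ∃ x, x ∉ l :=
  Cardinal.exists_notMem_of_length_lt l (by simpa using hcard)

/-- A near-one-factorization of the complete graph on `ι`: a proper edge colouring whose colours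
are the vertices, such that no edge is coloured by one of its endpoints. Values `c i i` are
irrelevant. -/
structure IsNearFactorization (c : ι → ι → ι) : Prop where
  symm : ∀ i j, c i j = c j i
  ne_left : ∀ {i j}, i ≠ j → c i j ≠ i
  proper : ∀ {i j k}, i ≠ j → i ≠ k → j ≠ k → c i j ≠ c i k

namespace IsNearFactorization

variable {c : ι → ι → ι} {a i x y : ι}

lemma ne_right (hc : IsNearFactorization c) (hai : a ≠ i) : c a i ≠ i :=
  hc.symm a i ▸ hc.ne_left hai.symm

variable [Fintype ι]

lemma apply_apply_ne (hc : IsNearFactorization c) (hι : Fintype.card ι = 5) (hai : a ≠ i) :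
    c a (c a i) ≠ i := by
  intro hcycle
  obtain ⟨j, hj⟩ : ∃ j, c a i = j := ⟨_, rfl⟩
  rw [hj] at hcycle
  have hja : j ≠ a := hj ▸ hc.ne_left hai
  have hji : j ≠ i := hj ▸ hc.ne_right hai
  obtain ⟨d, hd⟩ := exists_notMem_of_length_lt_card (l := [a, i, j]) (by simp [hι])
  obtain ⟨e, he⟩ := exists_notMem_of_length_lt_card (l := [a, i, j, d]) (by simp [hι])
  have hmem : ∀ x, x = a ∨ x = i ∨ x = j ∨ x = d ∨ x = e := by
    simpa using mem_of_nodup_of_length_eq_card (l := [a, i, j, d, e]) (by grind)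
      (by simp [hι])
  have hsymm := hc.symm
  have hleft := @hc.ne_left
  have hproper := @hc.proper
  have had : c a d = e := by
    have := hmem (c a d)
    grind
  have hae : c a e = d := by
    have := hmem (c a e)
    grind
  have hid : c i d = a := by
    have := hmem (c i d)
    grind
  have hie : c i e = a := by
    have := hmem (c i e)
    grind
  exact hc.proper (by grind) (by grind) (by grind) (hid.trans hie.symm)

lemma eq_iterate_apply (hc : IsNearFactorization c) (hι : Fintype.card ι = 5) (hx : a ≠ x)
    (hy : a ≠ y) (hxy : x ≠ y) : x = c a y ∨ x = c a (c a y) ∨ x = c a (c a (c a y)) := by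
  by_contra! hne
  obtain ⟨h₁, h₂, h₃⟩ := hne
  have hne₁ : c a y ≠ a := hc.ne_left hy
  have hne₂ : c a (c a y) ≠ a := hc.ne_left hne₁.symm
  have hleft := @hc.ne_left
  have hright := @hc.ne_right
  have hcycle : c a (c a y) ≠ y := hc.apply_apply_ne hι hy
  have hmem : ∀ z, z = a ∨ z = y ∨ z = c a y ∨ z = c a (c a y) ∨ z = x := by
    simpa using mem_of_nodup_of_length_eq_card (l := [a, y, c a y, c a (c a y), x]) (by grind)
      (by simp [hι])
  have hproper := @hc.proper
  have hcx : c a x = y := by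
    have := hmem (c a x)
    grind
  have := hmem (c a (c a (c a y)))
  grind

end IsNearFactorization

/-- The type of `w` with respect to the tropical hyperplane of `h`, that is `typeSet` for an
arbitrary index set and value group. -/
def tropicalType [Add R] [LE R] (h w : ι → R) : Set ι :=
  {i | ∀ j, h i + w i ≤ h j + w j}

section TropicalType

variable [AddCommGroup R] {g h w : ι → R} {x y : ι}

lemma sub_eq_sub_of_mem_tropicalType [PartialOrder R] (hgx : x ∈ tropicalType g w)
    (hgy : y ∈ tropicalType g w) (hhx : x ∈ tropicalType h w) (hhy : y ∈ tropicalType h w) :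
    g x - h x = g y - h y := by
  rw [← add_sub_add_right_eq_sub (g x), (hgx y).antisymm (hgy x), (hhx y).antisymm (hhy x),
    add_sub_add_right_eq_sub]

lemma sub_lt_sub_of_mem_tropicalType [LinearOrder R] [IsOrderedAddMonoid R]
    (hgx : x ∈ tropicalType g w) (hhx : x ∉ tropicalType h w) (hhy : y ∈ tropicalType h w) :
    g x - h x < g y - h y := by
  have hlt : h y + w y < h x + w x := by
    by_contra! hle
    exact hhx fun k => hle.trans (hhy k)
  calc g x - h x = (g x + w x) - (h x + w x) := (add_sub_add_right_eq_sub ..).symm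
    _ < (g y + w y) - (h y + w y) := (sub_lt_sub_left hlt _).trans_le (sub_le_sub_right (hgx y) _)
    _ = g y - h y := add_sub_add_right_eq_sub ..

end TropicalType

/-- An edge colouring `c` of the complete graph on `ι` together with rows `H i` whose differences
`H i - H j` are constant off `{i, j, c i j}` and satisfy the strict inequalities that hold when `ij`
has a witness with omitted index `c i j` (see `IsOmitted`). Values `c i i` are irrelevant. -/
structure IsExchangeColoring [Sub R] [LT R] (H : ι → ι → R) (c : ι → ι → ι) : Prop where
  symm : ∀ i j, c i j = c j i
  ne_left : ∀ {i j}, i ≠ j → c i j ≠ i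
  sub_eq_sub : ∀ {i j x y}, [i, j, c i j, x, y].Nodup → H i x - H j x = H i y - H j y
  exchange : ∀ {i j a b}, [i, j, c i j, a, b].Nodup →
    ∃ x, x ≠ a ∧ x ≠ b ∧ (x ≠ i → H a x - H i x < H a b - H i b) ∧
      (x ≠ j → H a x - H j x < H a b - H j b)

/-- The orientation of the edge `ij` from `i` to `j`: the difference `H i - H j` is smaller at
`c i j` than at the other indices outside `{i, j}`. -/
def IsArc [Sub R] [LT R] (H : ι → ι → R) (c : ι → ι → ι) (i j : ι) : Prop :=
  ∀ x, [i, j, c i j, x].Nodup → H i (c i j) - H j (c i j) < H i x - H j x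

namespace IsExchangeColoring

variable {H : ι → ι → R} {c : ι → ι → ι} {a i j k p q x y z : ι}

lemma not_lt_of_lt [Sub R] [Preorder R] (hc : IsExchangeColoring H c)
    (hnodup : [i, j, x, y, z].Nodup)
    (hxy : H i x - H j x < H i y - H j y) : ¬ H i y - H j y < H i z - H j z := by
  intro hyz
  have hi : c i j ≠ i := hc.ne_left (by grind)
  have hj : c i j ≠ j := hc.symm i j ▸ hc.ne_left (by grind)
  rcases eq_or_ne (c i j) x with hx | hx
  · exact hyz.ne (hc.sub_eq_sub (by grind))
  rcases eq_or_ne (c i j) y with hy | hy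
  · exact (hxy.trans hyz).ne (hc.sub_eq_sub (by grind))
  · exact hxy.ne (hc.sub_eq_sub (by grind))

lemma isArc_of_lt [Sub R] [Preorder R] (hc : IsExchangeColoring H c)
    (hnodup : [i, j, c i j, x].Nodup) (hlt : H i (c i j) - H j (c i j) < H i x - H j x) :
    IsArc H c i j := by
  intro y hy
  rcases eq_or_ne x y with rfl | hxy
  · exact hlt
  · exact hlt.trans_eq (hc.sub_eq_sub (by grind))

variable [AddCommGroup R] [LinearOrder R] [IsOrderedAddMonoid R] [Fintype ι]

lemma isNearFactorization (hc : IsExchangeColoring H c) (hι : Fintype.card ι = 5) :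
    IsNearFactorization c where
  symm := hc.symm
  ne_left := hc.ne_left
  proper := by
    intro i j k hij hik hjk heq
    have hi : c i j ≠ i := hc.ne_left hij
    have hj : c i j ≠ j := hc.symm i j ▸ hc.ne_left hij.symm
    have hk : c i j ≠ k := heq ▸ hc.symm i k ▸ hc.ne_left hik.symm
    obtain ⟨e, he⟩ := exists_notMem_of_length_lt_card (l := [i, j, k, c i j]) (by simp [hι])
    have hij_const : H i k - H j k = H i e - H j e := hc.sub_eq_sub (by grind)
    have hik_const : H i j - H k j = H i e - H k e := hc.sub_eq_sub (by grind)
    obtain ⟨x, hxk, hxe, hxi, hxj⟩ := hc.exchange (i := i) (j := j) (a := k) (b := e) (by grind)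
    obtain ⟨y, hyj, hye, hyi, hyk⟩ := hc.exchange (i := i) (j := k) (a := j) (b := e) (by grind)
    have hx : x ≠ j := by
      rintro rfl
      grind
    have hy : y ≠ k := by
      rintro rfl
      grind
    have hxe_lt : H k x - H j x < H k e - H j e := hxj hx
    have hey_lt : H k e - H j e < H k y - H j y := by grind
    exact hc.not_lt_of_lt (by grind) hxe_lt hey_lt

lemma isArc_or_isArc (hc : IsExchangeColoring H c) (hι : Fintype.card ι = 5) (hai : a ≠ i) :
    IsArc H c (c a i) a ∨ IsArc H c a i := by
  have hf := hc.isNearFactorization hι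
  obtain ⟨j, hj⟩ : ∃ j, c a i = j := ⟨_, rfl⟩
  have hja : j ≠ a := hj ▸ hf.ne_left hai
  have hji : j ≠ i := hj ▸ hf.ne_right hai
  have hb_ne_i : c a j ≠ i := hj ▸ hf.apply_apply_ne hι hai
  have hcij_ne_a : c i j ≠ a := by
    rw [← hj, hf.symm a i]
    exact hf.apply_apply_ne hι hai.symm
  have hb_ne_cij : c a j ≠ c i j := by
    rw [hf.symm a j, hf.symm i j]
    exact hf.proper hja hji hai
  have hb_ne_a : c a j ≠ a := hf.ne_left hja.symm
  have hb_ne_j : c a j ≠ j := hf.ne_right hja.symm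
  have hcij_ne_i : c i j ≠ i := hf.ne_left hji.symm
  have hcij_ne_j : c i j ≠ j := hf.ne_right hji.symm
  obtain ⟨x, hxa, hxb, hxi, hxj⟩ := hc.exchange (i := i) (j := j) (a := a) (b := c a j) (by grind)
  rw [hj]
  rcases eq_or_ne x j with rfl | hx
  · exact .inr (hc.isArc_of_lt (x := c a x) (by grind) (by grind))
  · have hja_eq : c j a = c a j := hf.symm j a
    exact .inl (hc.isArc_of_lt (x := x) (by grind) (by grind))

lemma not_isArc_of_isArc (hc : IsExchangeColoring H c) (hι : Fintype.card ι = 5) (hij : i ≠ j)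
    (harc : IsArc H c i j) : ¬ IsArc H c j i := by
  intro hrev
  obtain ⟨x, hx⟩ := exists_notMem_of_length_lt_card (l := [i, j, c i j]) (by simp [hι])
  have hi : c i j ≠ i := hc.ne_left hij
  have hj : c j i ≠ j := hc.ne_left hij.symm
  have hsymm := hc.symm i j
  have hlt := harc x (by grind)
  have hgt := hrev x (by grind)
  grind

lemma isArc_of_isArc_apply (hc : IsExchangeColoring H c) (hι : Fintype.card ι = 5) (hai : a ≠ i)
    (harc : IsArc H c a (c a i)) : IsArc H c a i :=
  (hc.isArc_or_isArc hι hai).resolve_left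
    (hc.not_isArc_of_isArc hι (hc.ne_left hai).symm harc)

lemma isArc_of_isArc (hc : IsExchangeColoring H c) (hι : Fintype.card ι = 5) (hax : a ≠ x)
    (hay : a ≠ y) (harc : IsArc H c a x) : IsArc H c a y := by
  have hay₁ : a ≠ c a y := (hc.ne_left hay).symm
  have hay₂ : a ≠ c a (c a y) := (hc.ne_left hay₁).symm
  rcases eq_or_ne x y with rfl | hxy
  · exact harc
  rcases (hc.isNearFactorization hι).eq_iterate_apply hι hax hay hxy with rfl | rfl | rfl
  · exact hc.isArc_of_isArc_apply hι hay harc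
  · exact hc.isArc_of_isArc_apply hι hay (hc.isArc_of_isArc_apply hι hay₁ harc)
  · exact hc.isArc_of_isArc_apply hι hay (hc.isArc_of_isArc_apply hι hay₁
      (hc.isArc_of_isArc_apply hι hay₂ harc))

lemma eq_of_isArc_of_isArc (hc : IsExchangeColoring H c) (hι : Fintype.card ι = 5) (hpx : p ≠ x)
    (hqy : q ≠ y) (hp : IsArc H c p x) (hq : IsArc H c q y) : p = q := by
  by_contra hpq
  exact hc.not_isArc_of_isArc hι hpq (hc.isArc_of_isArc hι hpx hpq hp)
    (hc.isArc_of_isArc hι hqy (Ne.symm hpq) hq)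

end IsExchangeColoring

theorem not_isExchangeColoring [AddCommGroup R] [LinearOrder R] [IsOrderedAddMonoid R] [Fintype ι]
    (hι : Fintype.card ι = 5) (H : ι → ι → R) (c : ι → ι → ι) : ¬ IsExchangeColoring H c := by
  intro hc
  obtain ⟨p, hp⟩ : ∃ p, ∀ a i, a ≠ i → c a i = p ∨ a = p := by
    have hsource : ∀ a i, a ≠ i → ∃ x, (c a i = x ∨ a = x) ∧ ∃ y, x ≠ y ∧ IsArc H c x y :=
      fun a i hai => (hc.isArc_or_isArc hι hai).elim
        (fun harc => ⟨c a i, .inl rfl, a, hc.ne_left hai, harc⟩)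
        (fun harc => ⟨a, .inr rfl, i, hai, harc⟩)
    obtain ⟨a₀, i₀, hai₀⟩ := Fintype.exists_pair_of_one_lt_card (α := ι) (by omega)
    obtain ⟨p, -, y, hpy, hp⟩ := hsource a₀ i₀ hai₀
    refine ⟨p, fun a i hai => ?_⟩
    obtain ⟨x, hx, z, hxz, hxarc⟩ := hsource a i hai
    rwa [hc.eq_of_isArc_of_isArc hι hpy hxz hp hxarc]
  obtain ⟨a, ha⟩ := exists_notMem_of_length_lt_card (l := [p]) (by simp [hι])
  obtain ⟨i, hi⟩ := exists_notMem_of_length_lt_card (l := [a]) (by simp [hι])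
  obtain ⟨j, hj⟩ := exists_notMem_of_length_lt_card (l := [a, i]) (by simp [hι])
  have hproper := (hc.isNearFactorization hι).proper (i := a) (j := i) (k := j)
  grind

section Witness

lemma exists_pair_eq_compl [Fintype ι] (hι : Fintype.card ι = 5) {i j a b : ι} (hij : i ≠ j)
    (hab : a ≠ b) (hi : i ∉ ({a, b} : Set ι)) (hj : j ∉ ({a, b} : Set ι)) :
    ∃ c, c ≠ i ∧ c ≠ j ∧ ({a, b} : Set ι) = {i, j, c}ᶜ := by
  obtain ⟨c, hc⟩ := exists_notMem_of_length_lt_card (l := [i, j, a, b]) (by simp [hι])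
  have hmem : ∀ x, x = i ∨ x = j ∨ x = c ∨ x = a ∨ x = b := by
    simpa using mem_of_nodup_of_length_eq_card (l := [i, j, c, a, b]) (by grind)
      (by simp [hι])
  refine ⟨c, by grind, by grind, ?_⟩
  ext x
  have := hmem x
  grind

/-- `c` is the index omitted by the pair `i, j`: some witness in `W` has type `{i, j, c}ᶜ` with
respect to both `H i` and `H j`. -/
def IsOmitted [Add R] [LE R] (W : Set (ι → R)) (H : ι → ι → R) (i j c : ι) : Prop :=
  c ≠ i ∧ c ≠ j ∧
    ∃ w ∈ W, tropicalType (H i) w = {i, j, c}ᶜ ∧ tropicalType (H j) w = {i, j, c}ᶜ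

namespace IsOmitted

variable {W : Set (ι → R)} {H : ι → ι → R} {a b c i j x y : ι}

lemma swap [Add R] [LE R] (hc : IsOmitted W H i j c) : IsOmitted W H j i c := by
  obtain ⟨hci, hcj, w, hw, hi, hj⟩ := hc
  rw [Set.insert_comm] at hi hj
  exact ⟨hcj, hci, w, hw, hj, hi⟩

lemma sub_eq_sub [AddCommGroup R] [PartialOrder R] (hc : IsOmitted W H i j c)
    (hnodup : [i, j, c, x, y].Nodup) :
    H i x - H j x = H i y - H j y := by
  obtain ⟨-, -, w, -, hi, hj⟩ := hc
  have hx : x ∈ ({i, j, c}ᶜ : Set ι) := by grind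
  have hy : y ∈ ({i, j, c}ᶜ : Set ι) := by grind
  exact sub_eq_sub_of_mem_tropicalType (hi ▸ hx) (hi ▸ hy) (hj ▸ hx) (hj ▸ hy)

lemma exchange [AddCommGroup R] [LinearOrder R] [IsOrderedAddMonoid R] [Fintype ι]
    (hι : Fintype.card ι = 5)
    (hcoord : ∀ w ∈ W, (tropicalType (H a) w).Nontrivial ∧ a ∉ tropicalType (H a) w)
    (hc : IsOmitted W H i j c) (hnodup : [i, j, c, a, b].Nodup) :
    ∃ x, x ≠ a ∧ x ≠ b ∧ (x ≠ i → H a x - H i x < H a b - H i b) ∧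
      (x ≠ j → H a x - H j x < H a b - H j b) := by
  obtain ⟨-, -, w, hw, hi, hj⟩ := hc
  obtain ⟨hnontrivial, ha⟩ := hcoord w hw
  obtain ⟨x, hx, hxb⟩ := hnontrivial.exists_ne b
  have hxa : x ≠ a := fun h => ha (h ▸ hx)
  have hmem : ∀ y, y = i ∨ y = j ∨ y = c ∨ y = a ∨ y = b := by
    simpa using mem_of_nodup_of_length_eq_card hnodup (by simp [hι])
  have hx_omitted : x ∉ ({i, j, c}ᶜ : Set ι) := by
    have := hmem x
    grind
  have hb : b ∈ ({i, j, c}ᶜ : Set ι) := by grind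
  exact ⟨x, hxa, hxb,
    fun _ => sub_lt_sub_of_mem_tropicalType hx (hi ▸ hx_omitted) (hi ▸ hb),
    fun _ => sub_lt_sub_of_mem_tropicalType hx (hj ▸ hx_omitted) (hj ▸ hb)⟩

end IsOmitted

variable {W : Set (ι → R)} {H : ι → ι → R}

lemma exists_isOmitted [Add R] [LE R] [Fintype ι] (hι : Fintype.card ι = 5)
    (hcoord : ∀ s, ∀ w ∈ W, s ∉ tropicalType (H s) w) {i j : ι} (hij : i ≠ j)
    (hwitness : ∃ w ∈ W, tropicalType (H i) w = tropicalType (H j) w ∧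
      ∃ a b, a ≠ b ∧ tropicalType (H i) w = {a, b}) :
    ∃ c, IsOmitted W H i j c := by
  obtain ⟨w, hw, htype, a, b, hab, hpair⟩ := hwitness
  obtain ⟨c, hci, hcj, hcompl⟩ := exists_pair_eq_compl hι hij hab
    (hpair ▸ hcoord i w hw) (hpair ▸ htype ▸ hcoord j w hw)
  exact ⟨c, hci, hcj, w, hw, hpair.trans hcompl, htype ▸ hpair.trans hcompl⟩

lemma isExchangeColoring_of_isOmitted [AddCommGroup R] [LinearOrder R] [IsOrderedAddMonoid R]
    [Fintype ι] (hι : Fintype.card ι = 5)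
    (hcoord : ∀ s, ∀ w ∈ W, (tropicalType (H s) w).Nontrivial ∧ s ∉ tropicalType (H s) w)
    {c : ι → ι → ι} (hsymm : ∀ i j, c i j = c j i)
    (hc : ∀ i j, i ≠ j → IsOmitted W H i j (c i j)) : IsExchangeColoring H c where
  symm := hsymm
  ne_left hij := (hc _ _ hij).1
  sub_eq_sub hnodup := (hc _ _ (by grind)).sub_eq_sub hnodup
  exchange hnodup := (hc _ _ (by grind)).exchange hι (hcoord _) hnodup

end Witness

theorem exists_pair_no_witness_general [Fintype ι] [LinearOrder ι] (hι : Fintype.card ι = 5)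
    [AddCommGroup R] [LinearOrder R] [IsOrderedAddMonoid R] (W : Set (ι → R)) (H : ι → ι → R)
    (hcoord : ∀ s, ∀ w ∈ W, (tropicalType (H s) w).Nontrivial ∧ s ∉ tropicalType (H s) w) :
    ∃ i j, i < j ∧ ¬ ∃ w ∈ W, tropicalType (H i) w = tropicalType (H j) w ∧
      ∃ a b, a ≠ b ∧ tropicalType (H i) w = {a, b} := by
  by_contra! hwitness
  have homitted : ∀ i j, i < j → ∃ c, IsOmitted W H i j c := fun i j hij =>
    exists_isOmitted hι (fun s w hw => (hcoord s w hw).2) hij.ne (hwitness i j hij)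
  choose! f hf using homitted
  refine not_isExchangeColoring hι H (fun i j => f (min i j) (max i j))
    (isExchangeColoring_of_isOmitted hι hcoord
      (fun i j => by rw [min_comm, max_comm]) fun i j hij => ?_)
  rcases hij.lt_or_gt with hlt | hgt
  · simpa only [min_eq_left hlt.le, max_eq_right hlt.le] using hf i j hlt
  · simpa only [min_eq_right hgt.le, max_eq_left hgt.le] using (hf j i hgt).swap

/-- If `W ⊆ ℝ^5` is finite and for each `s` the vector `h⁽ˢ⁾` is an `s`-coordinate
hyperplane for `W`, then some pair of the five hyperplanes has no witness in `W` to their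
nonstable intersection: there exist `i < j` such that no `w ∈ W` has equal two-element
types with respect to `h⁽ⁱ⁾` and `h⁽ʲ⁾`.  (Equivalently, `H(h⁽ⁱ⁾)` and `H(h⁽ʲ⁾)` contain
every point of `W` in their stable intersection.) -/
theorem exists_pair_no_witness (W : Finset (Fin 5 → ℝ)) (H : Fin 5 → Fin 5 → ℝ)
    (hcoord : ∀ s : Fin 5, IsCoordHyp s (H s) W) :
    ∃ i j : Fin 5, i < j ∧
      ¬ ∃ w ∈ W, typeSet (H i) w = typeSet (H j) w ∧
        ∃ a b : Fin 5, a ≠ b ∧ typeSet (H i) w = {a, b} :=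
  exists_pair_no_witness_general (by simp) (W : Set (Fin 5 → ℝ)) H fun s w hw =>
    (hcoord s w hw).imp_left fun ⟨i, j, hij, hi, hj⟩ => ⟨i, hi, j, hj, hij⟩
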